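/- Let q be even and let k ≥ 4 be a power of 2, and let n = k²−1. Let a ∈ F_{q^n} with N_{q^n/q}(a) = 1 and b = (∏_{i=1}^{k−1} a^{q^{ik}})^{−1}. Let h be a positive integer, N = n·h, and let V be the set of roots of P(x) = x^{q^k} − b·x^q − a·x in F_{q^N}. Then V is a k-dimensional F_q-subspace of F_{q^N}; the orbit C = {αV : α ∈ F_{q^N}, α ≠ 0} consists of exactly (q^N−1)/(q−1) distinct subspaces; and the minimum of d(U,W) = dim_{F_q}U + dim_{F_q}W − 2·dim_{F_q}(U ∩ W) over all pairs of distinct subspaces U, W ∈ C equals 2k−2. -/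

import Mathlib

/-!
Call a `K`-subspace `V` of `M` a Sidon space if `V` meets `αV` in dimension at most one whenever
`α ∉ K`. The stabilizer of a Sidon space of dimension `k ≥ 2` is then `Kˣ`, which gives the size of
the orbit, and distinct shifts are at distance at least `2k - 2`. Equality holds between `V` and
`(y / x)V` when `x, y ∈ V` are linearly independent.

The roots of `P` form a Sidon space as soon as `a, b ≠ 0`: if `x` and `αx` are roots, then
`b(α^{q^k} - α^q)x^q = a(α - α^{q^k})x`, which determines `x` up to a factor in `K` unless `α ∈ K`.

It remains to see that `P`, which is separable, has all its roots in `L`. Since `k` is prime to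
`n = k² - 1`, the greatest common divisor of `q^k - 1` and `q^n - 1` is `q - 1`, so an element of
norm one is a `(q^k - 1)`-th power in the cyclic group `Lˣ`. Thus `l^{q^k} = a l` for some `l ≠ 0`;
iterating `k` times gives `l^{q^k} = b l^q`. Hence `x = l y` is a root of `P` iff
`y^{q^k} = y^q + y`. In characteristic two, with `k` a power of two,
`T^{k²} - T = (T^k - T - 1)^k + (T^k - T - 1)`, and evaluating at the Frobenius gives
`y^{q^{k²}} = y^q`, that is, `y ∈ L`.
-/

open Module Polynomial
open scoped Pointwise

section SubspaceDistance

variable {A K M : Type*} [Monoid A] [DivisionRing K] [AddCommGroup M] [Module K M]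
  [DistribMulAction A M] [SMulCommClass A K M]

lemma finrank_pointwise_smul (u : Aˣ) (V : Submodule K M) : finrank K ↥(u • V) = finrank K V :=
  LinearEquiv.finrank_map_eq (DistribMulAction.toLinearEquiv K M u) V

lemma pointwise_smul_inf (u : Aˣ) (V W : Submodule K M) : u • (V ⊓ W) = u • V ⊓ u • W :=
  Submodule.map_inf _ (MulAction.injective u)

/-- The subspace distance `dim U + dim W - 2 dim (U ∩ W)`. For finite-dimensional `U` and `W` the
subtraction in `ℕ` is not truncated. -/
noncomputable def subspaceDist (U W : Submodule K M) : ℕ :=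
  finrank K U + finrank K W - 2 * finrank K ↥(U ⊓ W)

lemma subspaceDist_smul_smul (u : Aˣ) (U W : Submodule K M) :
    subspaceDist (u • U) (u • W) = subspaceDist U W := by
  rw [subspaceDist, subspaceDist, ← pointwise_smul_inf, finrank_pointwise_smul,
    finrank_pointwise_smul, finrank_pointwise_smul]

end SubspaceDistance

section Sidon

variable {K M : Type*} [Field K] [Field M] [Algebra K M] {V : Submodule K M}

lemma setOf_coe_eq_image_mul_eq_orbit (V : Submodule K M) :
    {W : Submodule K M | ∃ α : M, α ≠ 0 ∧ (W : Set M) = (α * ·) '' V} = MulAction.orbit Mˣ V := by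
  ext W
  constructor
  · rintro ⟨α, hα, hW⟩
    exact ⟨Units.mk0 α hα, SetLike.coe_injective hW.symm⟩
  · rintro ⟨u, rfl⟩
    exact ⟨u, u.ne_zero, rfl⟩

lemma smul_eq_self_of_mem_range_algebraMap {u : Mˣ} (hu : (u : M) ∈ (algebraMap K M).range) :
    u • V = V := by
  obtain ⟨c, hc⟩ := hu
  have hc0 : c ≠ 0 := by
    rintro rfl
    exact u.ne_zero (by rw [← hc, map_zero])
  have hsmul (x : M) : (u : M) * x = c • x := by rw [← hc, Algebra.smul_def]
  ext x
  constructor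
  · rintro ⟨v, hv, rfl⟩
    exact (congrArg (· ∈ V) (hsmul v)).mpr (V.smul_mem c hv)
  · intro hx
    exact ⟨c⁻¹ • x, V.smul_mem _ hx, (hsmul _).trans (smul_inv_smul₀ hc0 x)⟩

lemma exists_units_notMem_range_inf_smul_ne_bot (hdim : 1 < finrank K V) :
    ∃ u : Mˣ, (u : M) ∉ (algebraMap K M).range ∧ V ⊓ u • V ≠ ⊥ := by
  have : Nontrivial V := nontrivial_of_finrank_pos (zero_lt_one.trans hdim)
  obtain ⟨x, hx⟩ := exists_ne (0 : V)
  obtain ⟨y, hxy⟩ : ∃ y : V, ∀ c : K, c • x ≠ y := by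
    by_contra! hspan
    exact hdim.not_ge (finrank_le_one x hspan)
  have hx0 : (x : M) ≠ 0 := by simpa using hx
  have hy0 : (y : M) ≠ 0 := fun hy => hxy 0 (by ext; simp [hy])
  have hyx : (y : M) / x * x = y := div_mul_cancel₀ _ hx0
  refine ⟨Units.mk0 (y / x) (div_ne_zero hy0 hx0), ?_, ?_⟩
  · rintro ⟨c, hc⟩
    exact hxy c (Subtype.ext (by
      rw [Submodule.coe_smul, Algebra.smul_def, hc, Units.val_mk0, hyx]))
  · exact (Submodule.ne_bot_iff _).mpr ⟨y, ⟨y.2, x, x.2, hyx⟩, hy0⟩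

/-- Sidon spaces, in the form of a bound on the intersection with the shifts by non-scalars. For
finite-dimensional `V` this is equivalent to the factorization property of Bachoc, Serra and Zémor:
`ab = cd ≠ 0` with `a, b, c, d ∈ V` implies `{aK, bK} = {cK, dK}`. -/
def IsSidonSpace (V : Submodule K M) : Prop :=
  ∀ u : Mˣ, (u : M) ∉ (algebraMap K M).range → finrank K ↥(V ⊓ u • V) ≤ 1

namespace IsSidonSpace

lemma stabilizer_eq (hV : IsSidonSpace V) (hdim : 1 < finrank K V) :
    MulAction.stabilizer Mˣ V = (Units.map (algebraMap K M : K →* M)).range := by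
  ext u
  rw [MulAction.mem_stabilizer_iff]
  constructor
  · intro huV
    have hu : (u : M) ∈ (algebraMap K M).range := by
      by_contra hu
      have := hV u hu
      rw [huV, inf_idem] at this
      omega
    obtain ⟨c, hc⟩ := hu
    have hc0 : c ≠ 0 := by
      rintro rfl
      exact u.ne_zero (by rw [← hc, map_zero])
    exact ⟨Units.mk0 c hc0, Units.ext hc⟩
  · rintro ⟨c, rfl⟩
    exact smul_eq_self_of_mem_range_algebraMap ⟨c, rfl⟩

lemma card_units_mul_card_orbit (hV : IsSidonSpace V) (hdim : 1 < finrank K V) :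
    Nat.card Kˣ * Nat.card (MulAction.orbit Mˣ V) = Nat.card Mˣ := by
  have hinj : Function.Injective (Units.map (algebraMap K M : K →* M)) :=
    Units.map_injective (algebraMap K M).injective
  rw [← (MulAction.stabilizer Mˣ V).card_mul_index, MulAction.index_stabilizer,
    hV.stabilizer_eq hdim, Nat.card_congr (MonoidHom.ofInjective hinj).toEquiv]
  rfl

lemma card_orbit [Finite K] (hV : IsSidonSpace V) (hdim : 1 < finrank K V) :
    Nat.card (MulAction.orbit Mˣ V) = (Nat.card M - 1) / (Nat.card K - 1) := by
  rw [← Nat.card_units, ← Nat.card_units, ← hV.card_units_mul_card_orbit hdim,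
    Nat.mul_div_cancel_left _ Nat.card_pos]

lemma exists_subspaceDist_eq (hV : IsSidonSpace V) (hdim : 1 < finrank K V) :
    ∃ u : Mˣ, V ≠ u • V ∧ 2 * finrank K V - 2 = subspaceDist V (u • V) := by
  obtain ⟨u, hu, hne⟩ := exists_units_notMem_range_inf_smul_ne_bot hdim
  have : FiniteDimensional K V := .of_finrank_pos (zero_lt_one.trans hdim)
  have hone : finrank K ↥(V ⊓ u • V) = 1 :=
    le_antisymm (hV u hu) (Submodule.one_le_finrank_iff.mpr hne)
  refine ⟨u, fun huV => ?_, ?_⟩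
  · rw [← huV, inf_idem] at hone
    omega
  · rw [subspaceDist, hone, finrank_pointwise_smul]
    omega

lemma le_subspaceDist_self_smul (hV : IsSidonSpace V) {u : Mˣ} (hu : u • V ≠ V) :
    2 * finrank K V - 2 ≤ subspaceDist V (u • V) := by
  have hinf := hV u fun hrange => hu (smul_eq_self_of_mem_range_algebraMap hrange)
  rw [subspaceDist, finrank_pointwise_smul]
  omega

theorem isLeast_subspaceDist (hV : IsSidonSpace V) (hdim : 1 < finrank K V) :
    IsLeast {r : ℕ | ∃ U ∈ MulAction.orbit Mˣ V, ∃ W ∈ MulAction.orbit Mˣ V, U ≠ W ∧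
      r = subspaceDist U W} (2 * finrank K V - 2) := by
  constructor
  · obtain ⟨u, hne, hdist⟩ := hV.exists_subspaceDist_eq hdim
    exact ⟨V, MulAction.mem_orbit_self V, u • V, MulAction.mem_orbit V u, hne, hdist⟩
  · rintro r ⟨_, ⟨u, rfl⟩, _, ⟨w, rfl⟩, hne, rfl⟩
    have hw : w • V = u • (u⁻¹ * w) • V := by rw [smul_smul, mul_inv_cancel_left]
    beta_reduce at hne ⊢
    rw [hw] at hne ⊢
    rw [subspaceDist_smul_smul]
    exact hV.le_subspaceDist_self_smul fun heq => hne (by rw [heq])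

end IsSidonSpace

end Sidon

section Trinomial

lemma mem_range_algebraMap_of_pow_card_eq_self {K E : Type*} [Field K] [Fintype K] [Field E]
    [Algebra K E] {x : E} (hx : x ^ Fintype.card K = x) : x ∈ (algebraMap K E).range := by
  have hsplits : (X ^ Fintype.card K - X : K[X]).Splits := by
    rw [splits_iff_card_roots, FiniteField.roots_X_pow_card_sub_X,
      FiniteField.X_pow_card_sub_X_natDegree_eq K Fintype.one_lt_card]
    rfl
  exact hsplits.mem_range_of_isRoot (FiniteField.X_pow_card_sub_X_ne_zero K Fintype.one_lt_card)
    (by simp [hx])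

variable (K : Type*) [Field K] [Fintype K]

/-- The `K`-linear operator `x ↦ x ^ q ^ k - b * x ^ q - a * x`, where `q` is the order of `K`. -/
noncomputable def trinomialMap {E : Type*} [CommRing E] [Algebra K E] (k : ℕ) (a b : E) :
    End K E :=
  (FiniteField.frobeniusAlgHom K E).toLinearMap ^ k
    - b • (FiniteField.frobeniusAlgHom K E).toLinearMap - a • 1

/-- The space of roots of `x ^ q ^ k - b * x ^ q - a * x` in `E`, where `q` is the order of `K`. -/
noncomputable def trinomialSpace {E : Type*} [CommRing E] [Algebra K E] (k : ℕ) (a b : E) :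
    Submodule K E :=
  LinearMap.ker (trinomialMap K k a b)

/-- The polynomial `X ^ q ^ k - b X ^ q - a X`. -/
noncomputable def trinomialPoly {E : Type*} [CommRing E] (q k : ℕ) (a b : E) : E[X] :=
  X ^ q ^ k - C b * X ^ q - C a * X

variable {K}

section CommRing

variable {E : Type*} [CommRing E] [Algebra K E] {k : ℕ} {a b x : E}

lemma frobeniusAlgHom_toLinearMap_pow_apply (i : ℕ) (x : E) :
    ((FiniteField.frobeniusAlgHom K E).toLinearMap ^ i) x = x ^ Fintype.card K ^ i := by
  rw [End.pow_apply, AlgHom.coe_toLinearMap, FiniteField.coe_frobeniusAlgHom, pow_iterate]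

lemma trinomialMap_apply :
    trinomialMap K k a b x = x ^ Fintype.card K ^ k - b * x ^ Fintype.card K - a * x := by
  simp [trinomialMap, frobeniusAlgHom_toLinearMap_pow_apply]

lemma mem_trinomialSpace :
    x ∈ trinomialSpace K k a b ↔
      x ^ Fintype.card K ^ k - b * x ^ Fintype.card K - a * x = 0 := by
  rw [trinomialSpace, LinearMap.mem_ker, trinomialMap_apply]

lemma pow_card_mul_eq_of_mem_trinomialSpace {c : E} (hx : x ∈ trinomialSpace K k a b)
    (hcx : c * x ∈ trinomialSpace K k a b) :
    b * (c ^ Fintype.card K ^ k - c ^ Fintype.card K) * x ^ Fintype.card K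
      = a * (c - c ^ Fintype.card K ^ k) * x := by
  rw [mem_trinomialSpace] at hx hcx
  rw [mul_pow, mul_pow] at hcx
  linear_combination hcx - c ^ Fintype.card K ^ k * hx

lemma map_trinomialPoly {F : Type*} [CommRing F] (f : E →+* F) (q : ℕ) :
    (trinomialPoly q k a b).map f = trinomialPoly q k (f a) (f b) := by
  simp [trinomialPoly]

lemma natDegree_trinomialPoly [Nontrivial E] {q : ℕ} (hq : 1 < q) (hk : 1 < k) :
    (trinomialPoly q k a b).natDegree = q ^ k := by
  have hlt : q < q ^ k := lt_self_pow₀ hq hk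
  unfold trinomialPoly
  compute_degree!
  · simp [hlt.ne', hq.ne', (zero_lt_one.trans hk).ne']
  all_goals omega

end CommRing

section Field

variable {E : Type*} [Field E] [Algebra K E] {k : ℕ} {a b : E}

lemma pow_card_div_eq_of_mem_trinomialSpace (ha : a ≠ 0) (hb : b ≠ 0) {c x y : E}
    (hc : c ^ Fintype.card K ≠ c) (hx0 : x ≠ 0)
    (hx : x ∈ trinomialSpace K k a b) (hcx : c * x ∈ trinomialSpace K k a b)
    (hy : y ∈ trinomialSpace K k a b) (hcy : c * y ∈ trinomialSpace K k a b) :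
    (y / x) ^ Fintype.card K = y / x := by
  have hxeq := pow_card_mul_eq_of_mem_trinomialSpace hx hcx
  have hyeq := pow_card_mul_eq_of_mem_trinomialSpace hy hcy
  have hck : c ^ Fintype.card K ^ k - c ^ Fintype.card K ≠ 0 := by
    intro hzero
    rw [hzero, mul_zero, zero_mul, eq_comm] at hxeq
    have : c - c ^ Fintype.card K ^ k = 0 := by simpa [ha, hx0] using hxeq
    exact hc (by linear_combination -hzero - this)
  rw [div_pow, div_eq_div_iff (pow_ne_zero _ hx0) hx0]
  apply mul_left_cancel₀ (mul_ne_zero hb hck)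
  linear_combination x * hyeq - y * hxeq

theorem isSidonSpace_trinomialSpace (ha : a ≠ 0) (hb : b ≠ 0) :
    IsSidonSpace (trinomialSpace K k a b) := by
  intro u hu
  set V := trinomialSpace K k a b
  have hinv : ((u⁻¹ : Eˣ) : E) ^ Fintype.card K ≠ (u⁻¹ : Eˣ) := fun h =>
    hu (mem_range_algebraMap_of_pow_card_eq_self (by simpa using h))
  have hshift {z : E} (hz : z ∈ V ⊓ u • V) : ((u⁻¹ : Eˣ) : E) * z ∈ V := by
    obtain ⟨v, hv, rfl⟩ := hz.2
    simpa [Units.smul_def] using hv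
  rcases eq_or_ne (V ⊓ u • V) ⊥ with hbot | hbot
  · rw [hbot, finrank_bot]
    exact zero_le_one
  obtain ⟨x, hx, hx0⟩ := Submodule.exists_mem_ne_zero_of_ne_bot hbot
  refine finrank_le_one ⟨x, hx⟩ fun ⟨y, hy⟩ => ?_
  obtain ⟨c, hc⟩ := mem_range_algebraMap_of_pow_card_eq_self
    (pow_card_div_eq_of_mem_trinomialSpace ha hb hinv hx0 hx.1 (hshift hx) hy.1 (hshift hy))
  refine ⟨c, Subtype.ext ?_⟩
  rw [Submodule.coe_smul, Algebra.smul_def, hc, div_mul_cancel₀ _ hx0]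

lemma separable_trinomialPoly (hk : k ≠ 0) (ha : a ≠ 0) :
    (trinomialPoly (Fintype.card K) k a b).Separable := by
  have hq : (Fintype.card K : E) = 0 := by
    rw [← map_natCast (algebraMap K E), FiniteField.cast_card_eq_zero, map_zero]
  have hderiv : derivative (trinomialPoly (Fintype.card K) k a b) = -C a := by
    simp [trinomialPoly, derivative_X_pow, hq, hk]
  rw [Polynomial.Separable, hderiv, IsCoprime.neg_right_iff]
  exact ⟨0, C a⁻¹, by rw [zero_mul, zero_add, ← C_mul, inv_mul_cancel₀ ha, C_1]⟩

theorem finrank_trinomialSpace_of_splits (hk : 1 < k) (ha : a ≠ 0)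
    (hsplits : (trinomialPoly (Fintype.card K) k a b).Splits) :
    finrank K (trinomialSpace K k a b) = k := by
  classical
  set P := trinomialPoly (Fintype.card K) k a b
  have hsep : P.Separable := separable_trinomialPoly (zero_lt_one.trans hk).ne' ha
  have hroots : P.rootSet E = trinomialSpace K k a b := by
    ext x
    rw [mem_rootSet_of_ne hsep.ne_zero, SetLike.mem_coe, mem_trinomialSpace]
    simp [P, trinomialPoly]
  have hcard : Nat.card (trinomialSpace K k a b) = Fintype.card K ^ k := by
    rw [← natDegree_trinomialPoly (a := a) (b := b) Fintype.one_lt_card hk,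
      ← card_rootSet_eq_natDegree (K := E) hsep (by simpa using hsplits),
      ← Nat.card_eq_fintype_card, hroots]
    rfl
  have : Finite (trinomialSpace K k a b) :=
    Nat.finite_of_card_ne_zero (hcard ▸ (pow_pos Fintype.card_pos k).ne')
  rw [natCard_eq_pow_finrank (K := K), Nat.card_eq_fintype_card] at hcard
  exact Nat.pow_right_injective Fintype.one_lt_card hcard

lemma mul_mem_trinomialSpace_iff {l y : E} (hl : l ≠ 0) (hla : l ^ Fintype.card K ^ k = a * l)
    (hlb : l ^ Fintype.card K ^ k = b * l ^ Fintype.card K) :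
    l * y ∈ trinomialSpace K k a b ↔ y ∈ trinomialSpace K k (1 : E) 1 := by
  have hfactor : (l * y) ^ Fintype.card K ^ k - b * (l * y) ^ Fintype.card K - a * (l * y)
      = l ^ Fintype.card K ^ k * (y ^ Fintype.card K ^ k - 1 * y ^ Fintype.card K - 1 * y) := by
    rw [mul_pow, mul_pow]
    linear_combination y ^ Fintype.card K * hlb + y * hla
  rw [mem_trinomialSpace, mem_trinomialSpace, hfactor, mul_eq_zero,
    or_iff_right (pow_ne_zero _ hl)]

end Field

lemma X_pow_sub_X_sub_one_dvd_X_pow_sq_sub_X {R : Type*} [CommRing R] [CharP R 2] {k : ℕ}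
    (hk : ∃ m, k = 2 ^ m) : (X ^ k - X - 1 : R[X]) ∣ X ^ (k * k) - X := by
  obtain ⟨m, rfl⟩ := hk
  have hpow : (X ^ 2 ^ m - X - 1 : R[X]) ^ 2 ^ m = X ^ (2 ^ m * 2 ^ m) - X ^ 2 ^ m - 1 := by
    rw [sub_pow_char_pow, sub_pow_char_pow, ← pow_mul, one_pow]
  have hsum : (X ^ (2 ^ m * 2 ^ m) - X : R[X])
      = (X ^ 2 ^ m - X - 1) ^ 2 ^ m + (X ^ 2 ^ m - X - 1) := by
    rw [hpow]
    linear_combination CharTwo.two_eq_zero (R := R[X])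
  rw [hsum]
  exact dvd_add (dvd_pow_self _ (by positivity)) dvd_rfl

lemma pow_card_pow_eq_self_of_mem_trinomialSpace_one [CharP K 2] {E : Type*} [Field E]
    [Algebra K E] {k n : ℕ} (hk : ∃ m, k = 2 ^ m) (hn : k * k = n + 1) {y : E}
    (hy : y ∈ trinomialSpace K k (1 : E) 1) : y ^ Fintype.card K ^ n = y := by
  let φ : End K E := (FiniteField.frobeniusAlgHom K E).toLinearMap
  have hφ : aeval φ (X ^ k - X - 1 : K[X]) = trinomialMap K k 1 1 := by
    simp [trinomialMap, φ]
  obtain ⟨Q, hQ⟩ := X_pow_sub_X_sub_one_dvd_X_pow_sq_sub_X (R := K) hk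
  have hzero : aeval φ (X ^ (k * k) - X : K[X]) y = 0 := by
    rw [hQ, mul_comm, map_mul, hφ, End.mul_apply, LinearMap.mem_ker.mp hy, map_zero]
  have hpow : y ^ Fintype.card K ^ (k * k) = y ^ Fintype.card K := by
    simpa [φ, frobeniusAlgHom_toLinearMap_pow_apply, sub_eq_zero] using hzero
  rw [hn, pow_succ, pow_mul] at hpow
  exact (FiniteField.frobeniusAlgHom K E).injective hpow

end Trinomial

section Twist

lemma pow_pow_eq_prod_mul {R : Type*} [CommMonoid R] {a l : R} {r : ℕ} (hl : l ^ r = a * l)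
    (j : ℕ) : l ^ r ^ j = (∏ i ∈ Finset.range j, a ^ r ^ i) * l := by
  induction j with
  | zero => simp
  | succ j ih =>
    rw [pow_succ', pow_mul, hl, mul_pow, ih, Finset.prod_range_succ, mul_left_comm, mul_assoc]

lemma range_powMonoidHom_eq_ker {G : Type*} [CommGroup G] [IsCyclic G] [Finite G] (d : ℕ) :
    (powMonoidHom d : G →* G).range = (powMonoidHom (Nat.card G / (Nat.card G).gcd d)).ker := by
  have hdvd : Nat.card G ∣ d * (Nat.card G / (Nat.card G).gcd d) := by
    rw [← Nat.mul_div_assoc _ (Nat.gcd_dvd_left ..), mul_comm,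
      Nat.mul_div_assoc _ (Nat.gcd_dvd_right ..)]
    exact dvd_mul_right ..
  apply Subgroup.eq_of_le_of_card_ge
  · rintro _ ⟨x, rfl⟩
    rw [MonoidHom.mem_ker, powMonoidHom_apply, powMonoidHom_apply, ← pow_mul]
    exact orderOf_dvd_iff_pow_eq_one.mp ((orderOf_dvd_natCard x).trans hdvd)
  · rw [IsCyclic.card_powMonoidHom_range, IsCyclic.card_powMonoidHom_ker]
    exact Nat.gcd_le_right _ (Nat.div_pos (Nat.gcd_le_left _ Nat.card_pos)
      (Nat.gcd_pos_of_pos_left _ Nat.card_pos))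

variable {L : Type*} [Field L] [Fintype L] {q k n : ℕ} {a : L}

lemma exists_pow_pow_eq_mul_of_norm_eq_one (hcard : Fintype.card L = q ^ n) (hkn : n.Coprime k)
    (ha : a ^ ((q ^ n - 1) / (q - 1)) = 1) :
    ∃ l : L, l ≠ 0 ∧ l ^ q ^ k = a * l := by
  have hn : n ≠ 0 := by
    rintro rfl
    exact Fintype.one_lt_card.ne' (hcard.trans (pow_zero q))
  have hq : 1 < q := (Nat.one_lt_pow_iff hn).mp (hcard ▸ Fintype.one_lt_card)
  have hnorm : (q ^ n - 1) / (q - 1) ≠ 0 :=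
    (Nat.div_pos (Nat.sub_le_sub_right (Nat.le_self_pow hn q) 1) (Nat.sub_pos_of_lt hq)).ne'
  obtain ⟨u, rfl⟩ := IsUnit.of_pow_eq_one ha hnorm
  have hmem : u ∈ (powMonoidHom (q ^ k - 1) : Lˣ →* Lˣ).range := by
    rw [range_powMonoidHom_eq_ker, Nat.card_units, Nat.card_eq_fintype_card, hcard,
      Nat.pow_sub_one_gcd_pow_sub_one, hkn.gcd_eq_one, pow_one]
    exact Units.ext (by simpa using ha)
  obtain ⟨l, rfl⟩ := hmem
  refine ⟨l, l.ne_zero, ?_⟩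
  rw [powMonoidHom_apply, Units.val_pow_eq_pow_val,
    pow_sub_one_mul (pow_pos (zero_lt_one.trans hq) k).ne']

lemma pow_pow_eq_inv_prod_mul_pow (hcard : Fintype.card L = q ^ n) (hkn : k * k = n + 1)
    (ha : a ≠ 0) {l : L} (hl : l ^ q ^ k = a * l) :
    l ^ q ^ k = (∏ i ∈ Finset.Icc 1 (k - 1), a ^ q ^ (i * k))⁻¹ * l ^ q := by
  have hk : k ≠ 0 := by
    rintro rfl
    simp at hkn
  have hprod : ∏ i ∈ Finset.range k, a ^ (q ^ k) ^ i
      = a * ∏ i ∈ Finset.Icc 1 (k - 1), a ^ q ^ (i * k) := by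
    simp_rw [← pow_mul, mul_comm k]
    rw [Finset.range_eq_Ico, Finset.prod_eq_prod_Ico_succ_bot (Nat.pos_of_ne_zero hk),
      zero_mul, pow_zero, pow_one, zero_add,
      Finset.Icc_sub_one_right_eq_Ico_of_not_isMin (by simpa using hk)]
  have hfrob : l ^ (q ^ k) ^ k = l ^ q := by
    rw [← pow_mul, hkn, pow_succ, pow_mul, ← hcard, FiniteField.pow_card]
  have hne : ∏ i ∈ Finset.Icc 1 (k - 1), a ^ q ^ (i * k) ≠ 0 :=
    Finset.prod_ne_zero_iff.mpr fun i _ => pow_ne_zero _ ha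
  rw [← hfrob, pow_pow_eq_prod_mul hl, hprod, hl, eq_inv_mul_iff_mul_eq₀ hne]
  ring

theorem exists_twist (hcard : Fintype.card L = q ^ n) (hkn : k * k = n + 1)
    (ha : a ^ ((q ^ n - 1) / (q - 1)) = 1) :
    ∃ l : L, l ≠ 0 ∧ l ^ q ^ k = a * l ∧
      l ^ q ^ k = (∏ i ∈ Finset.Icc 1 (k - 1), a ^ q ^ (i * k))⁻¹ * l ^ q := by
  have hcoprime : n.Coprime (k * k) :=
    hkn ▸ Nat.coprime_self_add_right.mpr (Nat.coprime_one_right n)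
  obtain ⟨l, hl, hla⟩ :=
    exists_pow_pow_eq_mul_of_norm_eq_one hcard hcoprime.coprime_mul_left_right ha
  have ha0 : a ≠ 0 := left_ne_zero_of_mul (hla ▸ pow_ne_zero _ hl)
  exact ⟨l, hl, hla, pow_pow_eq_inv_prod_mul_pow hcard hkn ha0 hla⟩

end Twist

section Splitting

variable {K L : Type*} [Field K] [Fintype K] [CharP K 2] [Field L] [Fintype L] [Algebra K L]

theorem splits_trinomialPoly_of_twist {k n : ℕ} (hcard : Fintype.card L = Fintype.card K ^ n)
    (hk : ∃ m, k = 2 ^ m) (hkn : k * k = n + 1) {a b l : L} (hl : l ≠ 0)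
    (hla : l ^ Fintype.card K ^ k = a * l)
    (hlb : l ^ Fintype.card K ^ k = b * l ^ Fintype.card K) :
    (trinomialPoly (Fintype.card K) k a b).Splits := by
  let ι := algebraMap L (AlgebraicClosure L)
  refine Splits.of_splits_map ι (IsAlgClosed.splits _) fun x hx => ?_
  have hroot : x ∈ trinomialSpace K k (ι a) (ι b) := by
    have := (mem_roots'.mp hx).2
    simpa [mem_trinomialSpace, trinomialPoly] using this
  have hιl : ι l ≠ 0 := (map_ne_zero ι).mpr hl
  rw [← mul_inv_cancel_left₀ hιl x, mul_mem_trinomialSpace_iff hιl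
    (by simp only [← map_pow, ← map_mul, hla]) (by simp only [← map_pow, ← map_mul, hlb])] at hroot
  have hfixed := pow_card_pow_eq_self_of_mem_trinomialSpace_one hk hkn hroot
  rw [← hcard] at hfixed
  rw [← mul_inv_cancel_left₀ hιl x]
  exact mul_mem ⟨l, rfl⟩ (mem_range_algebraMap_of_pow_card_eq_self hfixed)

end Splitting

/-- Let `q` be even, `k ≥ 4` a power of `2`, `n = k² - 1`, and
`a, b ∈ F_{q^n}` with `N_{q^n/q}(a) = 1` and `b = (∏_{i=1}^{k-1} a^{q^{ik}})⁻¹`. For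
`N = n·h` let `V` be the set of roots of `P(x) = x^{q^k} − b·x^q − a·x` in `F_{q^N}`.
Then `V` is a `k`-dimensional `F_q`-subspace of `F_{q^N}`, its orbit `C = {αV : α ≠ 0}`
consists of exactly `(q^N-1)/(q-1)` distinct subspaces, and the minimum subspace distance
between distinct members of `C` is `2k-2`. -/
theorem stmt_19 (p q : ℕ) (hp : p.Prime) (hq : ∃ m : ℕ, 0 < m ∧ q = p ^ m)
    (hqeven : Even q)
    (K L M : Type*) [Field K] [Field L] [Field M]
    [Fintype K] [Fintype L] [Fintype M]
    [Algebra K L] [Algebra L M] [Algebra K M] [IsScalarTower K L M]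
    (hcardK : Fintype.card K = q)
    (k : ℕ) (hk : 4 ≤ k) (hk2 : ∃ m : ℕ, k = 2 ^ m)
    (n : ℕ) (hnval : n = k ^ 2 - 1) (hcardL : Fintype.card L = q ^ n)
    (h N : ℕ) (hh : 0 < h) (hNval : N = n * h) (hcardM : Fintype.card M = q ^ N)
    (a b : L) (ha : a ^ ((q ^ n - 1) / (q - 1)) = 1)
    (hb : b = (∏ i ∈ Finset.Icc 1 (k - 1), a ^ q ^ (i * k))⁻¹)
    (V : Set M)
    (hV : V = {x : M | x ^ q ^ k - algebraMap L M b * x ^ q - algebraMap L M a * x = 0})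
    (C : Set (Submodule K M))
    (hC : C = {W : Submodule K M | ∃ α : M, α ≠ 0 ∧ (W : Set M) = (α * ·) '' V}) :
    (∃ W : Submodule K M, (W : Set M) = V ∧ Module.finrank K W = k)
      ∧ Nat.card C = (q ^ N - 1) / (q - 1)
      ∧ IsLeast {r : ℕ | ∃ U ∈ C, ∃ W ∈ C, U ≠ W ∧
          r = Module.finrank K U + Module.finrank K W
                - 2 * Module.finrank K (U ⊓ W : Submodule K M)}
        (2 * k - 2) := by
  subst hcardK
  have hkn : k * k = n + 1 := by
    rw [hnval, ← sq, Nat.sub_add_cancel (Nat.one_le_pow _ _ (by omega))]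
  have : CharP K 2 :=
    ringChar.eq_iff.mp (FiniteField.even_card_iff_char_two.mpr (Nat.even_iff.mp hqeven))
  obtain ⟨l, hl, hla, hlb⟩ := exists_twist hcardL hkn ha
  rw [← hb] at hlb
  have ha0 : algebraMap L M a ≠ 0 :=
    (_root_.map_ne_zero _).mpr (left_ne_zero_of_mul (hla ▸ pow_ne_zero _ hl))
  have hb0 : algebraMap L M b ≠ 0 :=
    (_root_.map_ne_zero _).mpr (left_ne_zero_of_mul (hlb ▸ pow_ne_zero _ hl))
  let W : Submodule K M := trinomialSpace K k (algebraMap L M a) (algebraMap L M b)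
  have hWV : (W : Set M) = V := hV ▸ Set.ext fun x => mem_trinomialSpace
  have hsidon : IsSidonSpace W := isSidonSpace_trinomialSpace ha0 hb0
  have hdim : finrank K W = k := finrank_trinomialSpace_of_splits (by omega) ha0 <|
    map_trinomialPoly (algebraMap L M) _ ▸
      (splits_trinomialPoly_of_twist hcardL hk2 hkn hl hla hlb).map _
  have hdim1 : 1 < finrank K W := by omega
  rw [← hWV, setOf_coe_eq_image_mul_eq_orbit] at hC
  refine ⟨⟨W, hWV, hdim⟩, ?_, ?_⟩
  · rw [hC, hsidon.card_orbit hdim1, Nat.card_eq_fintype_card, Nat.card_eq_fintype_card, hcardM]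
  · rw [hC, ← hdim]
    exact hsidon.isLeast_subspaceDist hdim1
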